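/- With the notation of the context, assume n_α·Y ⊆ Y_{Q,n}. For 1 ≤ i ≤ r − 1 let α_i denote the linear functional y ↦ y_i − y_{i+1} on ℤ^r, extended to ℚ-linear functionals. Then { x ∈ Σ_{i=1}^{r−1} ℚ·α_i : x(y) ∈ ℤ for all y ∈ Y_{Q,n} } = Σ_{i=1}^{r−1} ℤ·(α_i/n_α); that is, a rational linear combination Σ c_i α_i takes integer values on all of Y_{Q,n} if and only if n_α·c_i ∈ ℤ for every i. (This says X_{Q,n} ∩ X^{sc}_ℚ = X_{Q,n}^{sc}, i.e. the torsion subgroup Γ^{tor}_{G_{Q,n}} attached to such a cover of GL_r is trivial.) -/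

import Mathlib

/-- The symmetric bilinear form on `Y = ℤ^r` attached to an `n`-fold Brylinski–Deligne
cover of `GL_r`: `B(e_i, e_i) = 2𝐩` and `B(e_i, e_j) = 𝐪` for `i ≠ j`. -/
def BGL (r : ℕ) (p q : ℤ) (x y : Fin r → ℤ) : ℤ :=
  2 * p * (∑ i, x i * y i) + q * ((∑ i, x i) * (∑ i, y i) - ∑ i, x i * y i)

lemma BGL_add_left (r : ℕ) (p q : ℤ) (a b y : Fin r → ℤ) :
    BGL r p q (a + b) y = BGL r p q a y + BGL r p q b y := by
  simp only [BGL, Pi.add_apply, add_mul, Finset.sum_add_distrib]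
  ring

lemma BGL_neg_left (r : ℕ) (p q : ℤ) (a y : Fin r → ℤ) :
    BGL r p q (-a) y = -BGL r p q a y := by
  simp only [BGL, Pi.neg_apply, neg_mul, Finset.sum_neg_distrib]
  ring

/-- The lattice `Y_{Q,n} = {y ∈ Y : B(y, y') ∈ nℤ for all y' ∈ Y}`. -/
def YQnGL (r n : ℕ) (p q : ℤ) : AddSubgroup (Fin r → ℤ) where
  carrier := {y | ∀ y', (n : ℤ) ∣ BGL r p q y y'}
  zero_mem' := by
    intro y'
    simp [BGL]
  add_mem' := by
    intro a b ha hb y'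
    rw [BGL_add_left]
    exact dvd_add (ha y') (hb y')
  neg_mem' := by
    intro a ha y'
    rw [BGL_neg_left]
    exact dvd_neg.mpr (ha y')

/-- `n_α = n / gcd(n, Q(α^∨))` with `Q(α^∨) = 2𝐩 - 𝐪`. -/
def nAlpha (n : ℕ) (p q : ℤ) : ℕ := n / Int.gcd (n : ℤ) (2 * p - q)

/-- The coroot lattice `Y_0 = {y ∈ ℤ^r : y_1 + ⋯ + y_r = 0}` of `GL_r`. -/
def Y0GL (r : ℕ) : AddSubgroup (Fin r → ℤ) where
  carrier := {y | ∑ i, y i = 0}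
  zero_mem' := by simp
  add_mem' := by
    intro a b ha hb
    have ha' : ∑ i, a i = 0 := ha
    have hb' : ∑ i, b i = 0 := hb
    show ∑ i, (a + b) i = 0
    simp only [Pi.add_apply, Finset.sum_add_distrib, ha', hb', add_zero]
  neg_mem' := by
    intro a ha
    have ha' : ∑ i, a i = 0 := ha
    show ∑ i, (-a) i = 0
    simp only [Pi.neg_apply, Finset.sum_neg_distrib, ha', neg_zero]

/-- The lattice `Y_{0,Q,n} = {y ∈ Y_0 : B(y, y') ∈ nℤ for all y' ∈ Y_0}`. -/
def Y0QnGL (r n : ℕ) (p q : ℤ) : AddSubgroup (Fin r → ℤ) where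
  carrier := {y | (∑ i, y i = 0) ∧
      ∀ y' : Fin r → ℤ, (∑ i, y' i = 0) → (n : ℤ) ∣ BGL r p q y y'}
  zero_mem' := ⟨by simp, fun y' _ => by simp [BGL]⟩
  add_mem' := by
    rintro a b ⟨ha0, ha⟩ ⟨hb0, hb⟩
    refine ⟨?_, fun y' hy' => ?_⟩
    · simp only [Pi.add_apply, Finset.sum_add_distrib, ha0, hb0, add_zero]
    · rw [BGL_add_left]
      exact dvd_add (ha y' hy') (hb y' hy')
  neg_mem' := by
    rintro a ⟨ha0, ha⟩
    refine ⟨?_, fun y' hy' => ?_⟩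
    · simp only [Pi.neg_apply, Finset.sum_neg_distrib, ha0, neg_zero]
    · rw [BGL_neg_left]
      exact dvd_neg.mpr (ha y' hy')

lemma nAlpha_dvd_sub (r n : ℕ) (hn : 0 < n) (p q : ℤ) (y : Fin r → ℤ)
    (hy : y ∈ YQnGL r n p q) (i j : Fin r) : ((nAlpha n p q : ℕ) : ℤ) ∣ y i - y j := by
  have hB : ∀ k : Fin r, BGL r p q y (Pi.single k 1) =
      (2 * p - q) * y k + q * ∑ l, y l := by
    intro k
    have h1 : ∑ l, y l * (Pi.single k (1 : ℤ) : Fin r → ℤ) l = y k := by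
      simp [Pi.single_apply]
    have h2 : ∑ l, (Pi.single k (1 : ℤ) : Fin r → ℤ) l = 1 := by
      simp [Pi.single_apply]
    rw [BGL, h1, h2]
    ring
  have h : (n : ℤ) ∣ (2 * p - q) * (y i - y j) := by
    have := dvd_sub (hy (Pi.single i 1)) (hy (Pi.single j 1))
    rw [hB, hB] at this
    have e : (2 * p - q) * (y i - y j) = (2 * p - q) * y i + q * ∑ l, y l -
        ((2 * p - q) * y j + q * ∑ l, y l) := by ring
    rw [e]
    exact this
  have hg : 0 < Int.gcd (n : ℤ) (2 * p - q) :=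
    Int.gcd_pos_of_ne_zero_left _ (by omega)
  have hn' : ((nAlpha n p q : ℕ) : ℤ) = (n : ℤ) / (Int.gcd (n : ℤ) (2 * p - q) : ℤ) := by
    simp [nAlpha]
  rw [hn']
  have hc : IsCoprime ((n : ℤ) / (Int.gcd (n : ℤ) (2 * p - q) : ℤ))
      ((2 * p - q) / (Int.gcd (n : ℤ) (2 * p - q) : ℤ)) := by
    rw [Int.isCoprime_iff_gcd_eq_one]
    exact Int.gcd_ediv_gcd_ediv_gcd hg
  refine hc.dvd_of_dvd_mul_left ?_
  have hd1 := Int.gcd_dvd_left (n : ℤ) (2 * p - q)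
  have hd2 := Int.gcd_dvd_right (n : ℤ) (2 * p - q)
  have hg' : (Int.gcd (n : ℤ) (2 * p - q) : ℤ) ≠ 0 := by exact_mod_cast hg.ne'
  refine Int.dvd_of_mul_dvd_mul_left hg' ?_
  rw [← mul_assoc, Int.mul_ediv_cancel' hd1, Int.mul_ediv_cancel' hd2]
  exact h

/-- Assume `n_α·Y ⊆ Y_{Q,n}`.  A rational linear combination
`Σ c_i α_i` of the simple roots `α_i(y) = y_i - y_{i+1}` takes integer values on all of
`Y_{Q,n}` if and only if `n_α·c_i ∈ ℤ` for every `i`; i.e.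
`X_{Q,n} ∩ X^{sc}_ℚ = X_{Q,n}^{sc}`, so the torsion subgroup `Γ^{tor}_{G_{Q,n}}`
attached to such a cover of `GL_r` is trivial. -/
theorem stmt16 (r n : ℕ) (hr : 2 ≤ r) (hn : 0 < n) (p q : ℤ)
    (hsat : ∀ y : Fin r → ℤ, ((nAlpha n p q : ℕ) : ℤ) • y ∈ YQnGL r n p q) :
    ∀ c : Fin (r - 1) → ℚ,
      (∀ y ∈ YQnGL r n p q, ∃ k : ℤ,
          (∑ i : Fin (r - 1),
            c i * ((y ⟨i.1, by have := i.2; omega⟩ - y ⟨i.1 + 1, by have := i.2; omega⟩ : ℤ) : ℚ))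
            = (k : ℚ))
        ↔ ∀ i : Fin (r - 1), ∃ k : ℤ, ((nAlpha n p q : ℕ) : ℚ) * c i = (k : ℚ) := by
  intro c
  constructor
  · intro h i
    obtain ⟨k, hk⟩ := h _ (hsat (fun j : Fin r => if j.1 ≤ i.1 then 1 else 0))
    refine ⟨k, ?_⟩
    rw [← hk, Finset.sum_eq_single i]
    · simp [mul_comm]
    · intro b _ hb
      have hb' : b.1 ≠ i.1 := fun e => hb (Fin.ext e)
      by_cases hlt : b.1 < i.1
      · have h1 : b.1 ≤ i.1 := hlt.le
        have h2 : b.1 + 1 ≤ i.1 := hlt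
        simp [h1, h2]
      · have h1 : ¬ b.1 ≤ i.1 := by omega
        have h2 : ¬ b.1 + 1 ≤ i.1 := by omega
        simp [h1, h2]
    · simp
  · intro h y hy
    choose k hk using h
    have hd := nAlpha_dvd_sub r n hn p q y hy
    choose m hm using hd
    refine ⟨∑ i : Fin (r - 1), k i * m ⟨i.1, by have := i.2; omega⟩
      ⟨i.1 + 1, by have := i.2; omega⟩, ?_⟩
    push_cast
    refine Finset.sum_congr rfl fun i _ => ?_
    rw [← hk, ← Int.cast_sub, hm]
    push_cast
    ring
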